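/- arXiv:2101.04950 — 2 statements merged into one kernel-verified Lean document; each statement's English description precedes it below -/
import Mathlib

section
/- Let V be a finite type and let f : V → V → ℝ be a nonnegative circulation, i.e. f u v ≥ 0 for all u, v and for every vertex v the total inflow ∑_u f u v equals the total outflow ∑_u f v u. If f is not identically zero, then the support of f contains a simple directed cycle: there exist m ≥ 1 and c : Fin (m+1) → V with c 0 = c m, with c injective on the first m indices, such that f (c i) (c (i+1)) > 0 for every i < m. -/
/-!
In a nonzero nonnegative circulation some arc carries positive flow, and by conservation every
vertex with positive inflow has positive outflow. Choosing a positive out-arc at each such vertex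
gives a self-map of a finite nonempty set, which has a periodic point; its orbit, followed for
exactly one minimal period, visits no vertex twice and closes up.
-/

open Function

section Relation

variable {V : Type*} {r : V → V → Prop}

/-- The digraph with arc relation `r` contains a simple directed cycle. The cycle is encoded by its
vertex sequence `c`, with the starting vertex repeated at the end; loops (`m = 1`) and pairs of
opposite arcs (`m = 2`) count as cycles. -/
def HasSimpleCycle (r : V → V → Prop) : Prop :=
  ∃ m : ℕ, 1 ≤ m ∧ ∃ c : Fin (m + 1) → V,
    c 0 = c (Fin.last m) ∧
    Injective (fun i : Fin m => c i.castSucc) ∧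
    ∀ i : Fin m, r (c i.castSucc) (c i.succ)

theorem exists_mem_periodicPts_of_mapsTo {g : V → V} {s : Set V} (hfin : s.Finite)
    (hne : s.Nonempty) (hg : Set.MapsTo g s s) : ∃ x ∈ s, x ∈ periodicPts g := by
  obtain ⟨v, hv⟩ := hne
  obtain ⟨m, n, hmn, heq⟩ : ∃ m n, m < n ∧ g^[m] v = g^[n] v :=
    hfin.exists_lt_map_eq_of_forall_mem fun k => hg.iterate k hv
  refine ⟨g^[m] v, hg.iterate m hv, mk_mem_periodicPts (Nat.sub_pos_of_lt hmn) ?_⟩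
  calc g^[n - m] (g^[m] v) = g^[n] v := by
        rw [← iterate_add_apply, Nat.sub_add_cancel hmn.le]
    _ = g^[m] v := heq.symm

theorem hasSimpleCycle_of_mem_periodicPts {g : V → V} {x : V} (hx : x ∈ periodicPts g)
    (hr : ∀ n, r (g^[n] x) (g^[n + 1] x)) : HasSimpleCycle r :=
  ⟨minimalPeriod g x, minimalPeriod_pos_of_mem_periodicPts hx, fun i => g^[i] x,
    iterate_minimalPeriod.symm,
    fun i j hij => Fin.ext (iterate_injOn_Iio_minimalPeriod i.isLt j.isLt hij),
    fun i => hr i⟩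

theorem hasSimpleCycle_of_forall_mem_exists {s : Set V} (hfin : s.Finite) (hne : s.Nonempty)
    (hs : ∀ v ∈ s, ∃ w ∈ s, r v w) : HasSimpleCycle r := by
  have : Nonempty V := hne.to_type
  choose! g hgs hgr using hs
  obtain ⟨x, hxs, hx⟩ := exists_mem_periodicPts_of_mapsTo hfin hne hgs
  refine hasSimpleCycle_of_mem_periodicPts hx fun n => ?_
  rw [iterate_succ_apply']
  exact hgr _ (Set.MapsTo.iterate hgs n hxs)

end Relation

section Flow

variable {ι κ V M : Type*} [PartialOrder M]

theorem exists_pos_of_nonneg_of_ne_zero [Zero M] {f : ι → κ → M} (hnn : ∀ i j, 0 ≤ f i j)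
    (hne : f ≠ 0) : ∃ i j, 0 < f i j := by
  obtain ⟨i, hi⟩ := ne_iff.mp hne
  obtain ⟨j, hj⟩ := ne_iff.mp hi
  exact ⟨i, j, (hnn i j).lt_of_ne' hj⟩

variable [AddCommMonoid M] [IsOrderedAddMonoid M]

theorem exists_pos_of_sum_le_sum [Fintype ι] [Fintype κ] {a : ι → M} {b : κ → M}
    (ha : ∀ i, 0 ≤ a i) (hb : ∀ j, 0 ≤ b j) (hab : ∑ i, a i ≤ ∑ j, b j) (hpos : ∃ i, 0 < a i) :
    ∃ j, 0 < b j := by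
  have hsum : 0 < ∑ i, a i :=
    (Finset.sum_pos_iff_of_nonneg fun i _ => ha i).mpr (by simpa using hpos)
  simpa using (Finset.sum_pos_iff_of_nonneg fun j _ => hb j).mp (hsum.trans_le hab)

theorem stmt2_general [Fintype V] (f : V → V → M) (hnn : ∀ u v, 0 ≤ f u v)
    (hle : ∀ v, ∑ u, f u v ≤ ∑ u, f v u) (hne : f ≠ 0) :
    HasSimpleCycle fun u v => 0 < f u v := by
  obtain ⟨a, b, hab⟩ := exists_pos_of_nonneg_of_ne_zero hnn hne
  refine hasSimpleCycle_of_forall_mem_exists (s := {v | ∃ u, 0 < f u v}) (Set.toFinite _)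
    ⟨b, a, hab⟩ fun v hv => ?_
  obtain ⟨w, hw⟩ := exists_pos_of_sum_le_sum (fun u => hnn u v) (hnn v) (hle v) hv
  exact ⟨w, ⟨v, hw⟩, hw⟩

end Flow

/-- A nonzero nonnegative circulation on a finite vertex set contains a
simple directed cycle in its support: there are `m ≥ 1` and `c : Fin (m+1) → V` with
`c 0 = c m`, injective on the first `m` indices, and `f (c i) (c (i+1)) > 0` for
every `i < m`. -/
theorem stmt2 {V : Type*} [Fintype V] (f : V → V → ℝ)
    (hnn : ∀ u v, 0 ≤ f u v)
    (hcons : ∀ v, ∑ u, f u v = ∑ u, f v u)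
    (hne : f ≠ 0) :
    ∃ m : ℕ, 1 ≤ m ∧ ∃ c : Fin (m + 1) → V,
      c 0 = c (Fin.last m) ∧
      Function.Injective (fun i : Fin m => c i.castSucc) ∧
      ∀ i : Fin m, 0 < f (c i.castSucc) (c i.succ) :=
  stmt2_general f hnn (fun v => (hcons v).le) hne
end

section
/- Let V be a finite type, f : V → V → ℝ a nonnegative circulation, and c : Fin (m+1) → V a simple directed cycle of length m ≥ 1 with f (c i) (c (i+1)) > 0 for every i < m. Let ε be the minimum of f (c i) (c (i+1)) over i < m, and define g : V → V → ℝ by g u v = f u v − ε if (u,v) is an arc of the cycle and g u v = f u v otherwise. Then g is again a nonnegative circulation, the support of g is contained in the support of f, and there is at least one pair (u,v) with f u v > 0 but g u v = 0; in particular f = g + ε·χ where χ is the indicator function of the arcs of the cycle. -/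
open Classical

/-!
A unit of flow sent along a closed walk `c` enters `v` once for each `i` with `c (i + 1) = v` and
leaves `v` once for each `i` with `c i = v`; shifting the index around the closed walk shows that
these counts agree. When no arc is repeated, this flow is the indicator `χ` of the arcs of `c`, so
`g = f - ε • χ` is a difference of circulations. The choice of `ε` as the least value of `f` along
`c` keeps `g` nonnegative and makes it vanish on an arc where the minimum is attained.
-/

section Circulation

variable {V M : Type*} [Fintype V]

/-- Flow conservation at every vertex: inflow equals outflow. Sign conditions are kept separate, so
that circulations are closed under subtraction. -/
def IsCirculation [AddCommMonoid M] (f : V → V → M) : Prop :=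
  ∀ v, ∑ u, f u v = ∑ u, f v u

lemma IsCirculation.sub [AddCommGroup M] {f g : V → V → M} (hf : IsCirculation f)
    (hg : IsCirculation g) : IsCirculation (f - g) := fun v => by
  simp only [Pi.sub_apply, Finset.sum_sub_distrib, hf v, hg v]

end Circulation

section Walk

variable {V M : Type*} [AddCommMonoid M] {m : ℕ}

/-- The pair `(u, v)` is one of the arcs traversed by the walk `c 0, …, c m`. This is reducible so
that `if IsArc c u v` and the `if` over the unfolded existential carry the same decidability
instance. -/
abbrev IsArc (c : Fin (m + 1) → V) (u v : V) : Prop :=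
  ∃ i : Fin m, c i.castSucc = u ∧ c i.succ = v

/-- The flow that sends the amount `a` along the walk `c 0, …, c m`; an arc traversed several times
carries `a` with multiplicity. -/
noncomputable def walkFlow (c : Fin (m + 1) → V) (a : M) (u v : V) : M :=
  ∑ i : Fin m, if c i.castSucc = u ∧ c i.succ = v then a else 0

lemma walkFlow_eq_ite_isArc {c : Fin (m + 1) → V}
    (hinj : Function.Injective fun i : Fin m => (c i.castSucc, c i.succ)) (a : M) (u v : V) :
    walkFlow c a u v = if IsArc c u v then a else 0 := by
  split_ifs with h
  · obtain ⟨i, rfl, rfl⟩ := h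
    have hiff (j : Fin m) : (c j.castSucc = c i.castSucc ∧ c j.succ = c i.succ) ↔ j = i :=
      Prod.mk_inj.symm.trans hinj.eq_iff
    simp only [walkFlow, hiff, Finset.sum_ite_eq', Finset.mem_univ, if_true]
  · exact Finset.sum_eq_zero fun i _ => if_neg fun hi => h ⟨i, hi⟩

lemma sum_succ_eq_sum_castSucc {x : Fin (m + 1) → M} (hx : x 0 = x (Fin.last m)) :
    ∑ i : Fin m, x i.succ = ∑ i : Fin m, x i.castSucc := by
  cases m with
  | zero => rfl
  | succ n =>
    rw [Fin.sum_univ_castSucc, Fin.sum_univ_succ fun i => x i.castSucc, add_comm]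
    simp only [Fin.succ_last, Fin.castSucc_zero, Fin.succ_castSucc, hx]

variable [Fintype V]

lemma sum_walkFlow_left (c : Fin (m + 1) → V) (a : M) (v : V) :
    ∑ u, walkFlow c a u v = ∑ i : Fin m, if c i.succ = v then a else 0 := by
  simp only [walkFlow]
  rw [Finset.sum_comm]
  simp only [ite_and, Finset.sum_ite_eq, Finset.mem_univ, if_true]

lemma sum_walkFlow_right (c : Fin (m + 1) → V) (a : M) (v : V) :
    ∑ u, walkFlow c a v u = ∑ i : Fin m, if c i.castSucc = v then a else 0 := by
  simp only [walkFlow]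
  rw [Finset.sum_comm]
  simp only [ite_and, Finset.sum_ite_irrel, Finset.sum_ite_eq, Finset.mem_univ, if_true,
    Finset.sum_const_zero]

lemma isCirculation_walkFlow {c : Fin (m + 1) → V} (hc : c 0 = c (Fin.last m)) (a : M) :
    IsCirculation (walkFlow c a) := fun v => by
  rw [sum_walkFlow_left, sum_walkFlow_right]
  exact sum_succ_eq_sum_castSucc (x := fun i => if c i = v then a else 0) (by rw [hc])

end Walk

theorem stmt3_general {V R : Type*} [Fintype V] [Ring R] [PartialOrder R] [IsOrderedAddMonoid R]
    {m : ℕ} {f g : V → V → R} {c : Fin (m + 1) → V} {ε : R}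
    (hnn : ∀ u v, 0 ≤ f u v)
    (hf : IsCirculation f)
    (hc : c 0 = c (Fin.last m))
    (hinj : Function.Injective fun i : Fin m => (c i.castSucc, c i.succ))
    (hpos : ∀ i : Fin m, 0 < f (c i.castSucc) (c i.succ))
    (hε : IsLeast {x : R | ∃ i : Fin m, x = f (c i.castSucc) (c i.succ)} ε)
    (hg : ∀ u v, g u v = if IsArc c u v then f u v - ε else f u v) :
    (∀ u v, 0 ≤ g u v) ∧
    IsCirculation g ∧
    (∀ u v, g u v ≠ 0 → f u v ≠ 0) ∧
    (∃ u v, 0 < f u v ∧ g u v = 0) ∧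
    (∀ u v, f u v = g u v + ε * (if IsArc c u v then 1 else 0)) := by
  obtain ⟨⟨k, hk⟩, hmin⟩ := hε
  have hg_arc (i : Fin m) : g (c i.castSucc) (c i.succ) = f (c i.castSucc) (c i.succ) - ε := by
    rw [hg, if_pos ⟨i, rfl, rfl⟩]
  have hg_not_arc {u v : V} (h : ¬IsArc c u v) : g u v = f u v := by rw [hg, if_neg h]
  have hdecomp (u v : V) : f u v = g u v + if IsArc c u v then ε else 0 := by
    rw [hg]
    split_ifs
    exacts [(sub_add_cancel _ _).symm, (add_zero _).symm]
  have hsub : g = f - walkFlow c ε := by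
    ext u v
    rw [Pi.sub_apply, Pi.sub_apply, walkFlow_eq_ite_isArc hinj, eq_sub_iff_add_eq, hdecomp]
  refine ⟨fun u v => ?_, hsub ▸ hf.sub (isCirculation_walkFlow hc ε), fun u v hguv => ?_,
    ⟨_, _, hpos k, by rw [hg_arc, hk, sub_self]⟩, fun u v => ?_⟩
  · by_cases h : IsArc c u v
    · obtain ⟨i, rfl, rfl⟩ := h
      exact hg_arc i ▸ sub_nonneg.2 (hmin ⟨i, rfl⟩)
    · exact hg_not_arc h ▸ hnn u v
  · by_cases h : IsArc c u v
    · obtain ⟨i, rfl, rfl⟩ := h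
      exact (hpos i).ne'
    · exact hg_not_arc h ▸ hguv
  · rw [mul_ite, mul_one, mul_zero, ← hdecomp]

/-- Subtracting from a nonnegative circulation `f` the minimum value `ε`
of `f` along a simple directed cycle (with positive flow on all its arcs) yields again
a nonnegative circulation `g`, with support contained in that of `f`, killing at least
one arc of the support; and `f = g + ε·χ` where `χ` is the indicator of the cycle's
arcs. -/
theorem stmt3 {V : Type*} [Fintype V] {m : ℕ} (hm : 1 ≤ m)
    (f : V → V → ℝ)
    (hnn : ∀ u v, 0 ≤ f u v)
    (hcons : ∀ v, ∑ u, f u v = ∑ u, f v u)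
    (c : Fin (m + 1) → V)
    (hc0 : c 0 = c (Fin.last m))
    (hinj : Function.Injective (fun i : Fin m => c i.castSucc))
    (hpos : ∀ i : Fin m, 0 < f (c i.castSucc) (c i.succ))
    (ε : ℝ)
    (hε : IsLeast {x : ℝ | ∃ i : Fin m, x = f (c i.castSucc) (c i.succ)} ε)
    (g : V → V → ℝ)
    (hg : ∀ u v, g u v =
      if ∃ i : Fin m, c i.castSucc = u ∧ c i.succ = v then f u v - ε else f u v) :
    (∀ u v, 0 ≤ g u v) ∧
    (∀ v, ∑ u, g u v = ∑ u, g v u) ∧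
    (∀ u v, g u v ≠ 0 → f u v ≠ 0) ∧
    (∃ u v, 0 < f u v ∧ g u v = 0) ∧
    (∀ u v, f u v =
      g u v + ε * (if ∃ i : Fin m, c i.castSucc = u ∧ c i.succ = v then 1 else 0)) :=
  stmt3_general hnn hcons hc0 (Function.Injective.of_comp (f := Prod.fst) hinj) hpos hε hg
end
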